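/- arXiv:2008.05177 — 2 statements merged into one kernel-verified Lean document; each statement's English description precedes it below -/
import Mathlib

section
/- Fix probabilities w_1,...,w_M ≥ 0 with ∑ w_i = 1 and another probability vector v_1,...,v_M ≥ 0 with ∑ v_i = 1. If W̃ takes value w_i with probability π_i = φ w_i + (1-φ) v_i, where the v_i are exchangeable random variables independent of the w_i, then E[M·W̃ - 1 | w_1,...,w_M] = φ(M·w^{(2)} - 1), the same as under uniform noise. -/
open MeasureTheory

/-- Robustness of Google's estimator: with fixed probabilities `w_i` and an exchangeable
random probability vector `(v_i)` (independent of the fixed `w`'s), if `W̃` takes value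
`w_i` with probability `φ w_i + (1-φ) v_i`, then the conditional expectation of
`M W̃ - 1` given the `w`'s equals `φ (M w⁽²⁾ - 1)`, the same as under uniform noise. -/
theorem google_estimator_robust {Ω : Type*} [MeasurableSpace Ω] (P : Measure Ω)
    [IsProbabilityMeasure P] (M : ℕ) (hM : 1 ≤ M) (φ : ℝ) (hφ : φ ∈ Set.Icc (0 : ℝ) 1)
    (w : Fin M → ℝ) (hw0 : ∀ i, 0 ≤ w i) (hw1 : ∑ i, w i = 1)
    (v : Fin M → Ω → ℝ) (hvmeas : ∀ i, Measurable (v i))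
    (hv0 : ∀ i ω, 0 ≤ v i ω) (hv1 : ∀ ω, ∑ i, v i ω = 1)
    (hexch : ∀ σ : Equiv.Perm (Fin M),
      Measure.map (fun ω (i : Fin M) => v (σ i) ω) P
        = Measure.map (fun ω (i : Fin M) => v i ω) P) :
    ∫ ω, ∑ i, (φ * w i + (1 - φ) * v i ω) * ((M : ℝ) * w i - 1) ∂P
      = φ * ((M : ℝ) * ∑ i, (w i) ^ 2 - 1) := by
  have hint : ∀ i, Integrable (v i) P := by
    intro i
    refine Integrable.of_bound (hvmeas i).aestronglyMeasurable 1 (Filter.Eventually.of_forall ?_)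
    intro ω
    rw [Real.norm_of_nonneg (hv0 i ω), ← hv1 ω]
    exact Finset.single_le_sum (f := fun i => v i ω) (fun j _ => hv0 j ω) (Finset.mem_univ i)
  have heq : ∀ i j, ∫ ω, v i ω ∂P = ∫ ω, v j ω ∂P := by
    intro i j
    have h := congrArg (fun μ : Measure (Fin M → ℝ) => ∫ x, x j ∂μ) (hexch (Equiv.swap i j))
    rw [integral_map (measurable_pi_lambda _ fun k => hvmeas _).aemeasurable
        (measurable_pi_apply j).aestronglyMeasurable,
      integral_map (measurable_pi_lambda _ fun k => hvmeas _).aemeasurable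
        (measurable_pi_apply j).aestronglyMeasurable] at h
    simpa using h
  have hterm : ∀ i, ∫ ω, (φ * w i + (1 - φ) * v i ω) * ((M : ℝ) * w i - 1) ∂P
      = (φ * w i + (1 - φ) * ∫ ω, v i ω ∂P) * ((M : ℝ) * w i - 1) := by
    intro i
    rw [integral_mul_const, integral_add (integrable_const _) ((hint i).const_mul _),
      integral_const_mul (1 - φ) (v i)]
    simp
  have hI : ∀ i, Integrable (fun ω => (φ * w i + (1 - φ) * v i ω) * ((M : ℝ) * w i - 1)) P :=
    fun i => ((integrable_const (φ * w i)).add ((hint i).const_mul (1 - φ))).mul_const _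
  rw [integral_finsetSum _ fun i _ => hI i]
  simp only [hterm]
  let i0 : Fin M := ⟨0, hM⟩
  simp only [fun i => heq i i0]
  generalize ∫ ω, v i0 ω ∂P = c
  have e : ∀ i, (φ * w i + (1 - φ) * c) * ((M : ℝ) * w i - 1)
      = φ * M * w i ^ 2 + ((1 - φ) * c * M - φ) * w i - (1 - φ) * c := by
    intro i; ring
  simp only [e, Finset.sum_sub_distrib, Finset.sum_add_distrib, ← Finset.mul_sum, hw1]
  simp
  ring
end

section
/- Fix x ∈ {0,1}^n, let (w_y)_{y ∈ {0,1}^n} ~ Dirichlet(1,...,1) with M = 2^n, and let B_q(y) = q^{|y|}(1-q)^{n-|y|}. Then M² E[(∑_{y ≠ 0} w_{x⊕y} B_q(y))²] = (M/(M+1)) · {[q² + (1-q)²]^n - 2(1-q)^n + 1}. -/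
open MeasureTheory
open scoped ENNReal

/-- The Dirichlet(1,...,1) distribution on `Fin M → ℝ`, i.e. the uniform probability
distribution on the standard `(M-1)`-dimensional simplex, obtained as the pushforward of the
normalized Lebesgue measure on `{x : Fin (M-1) → ℝ | x ≥ 0, ∑ x ≤ 1}` under the map
appending the last coordinate `1 - ∑ x`. -/
noncomputable def stdSimplexUniform (M : ℕ) : Measure (Fin M → ℝ) :=
  Measure.map
    (fun (x : Fin (M - 1) → ℝ) (i : Fin M) =>
      if h : (i : ℕ) < M - 1 then x ⟨i, h⟩ else 1 - ∑ j, x j)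
    ((Nat.factorial (M - 1) : ℝ≥0∞) •
      volume.restrict {x : Fin (M - 1) → ℝ | (∀ i, 0 ≤ x i) ∧ ∑ i, x i ≤ 1})

/-- Hamming weight of a bitstring `y : Fin n → Bool`. -/
def hammingWt {n : ℕ} (y : Fin n → Bool) : ℕ :=
  (Finset.univ.filter fun i => y i = true).card

/-- The Dirichlet(1,...,1) distribution indexed by bitstrings in `{0,1}^n`, `M = 2^n`,
obtained by transporting `stdSimplexUniform (2^n)` along an equivalence
`(Fin n → Bool) ≃ Fin (2^n)` (the uniform distribution on the simplex is
permutation-invariant, so the choice of equivalence is immaterial). -/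
noncomputable def bitstringDirichlet (n : ℕ) : Measure ((Fin n → Bool) → ℝ) :=
  Measure.map
    (fun (w : Fin (2 ^ n) → ℝ) (y : Fin n → Bool) =>
      w ((Fintype.equivFinOfCardEq (by simp [Fintype.card_fun]) : (Fin n → Bool) ≃ Fin (2 ^ n)) y))
    (stdSimplexUniform (2 ^ n))


/-- Scaled corner simplex. -/
def cornerSimplex (m : ℕ) (t : ℝ) : Set (Fin m → ℝ) :=
  {x | (∀ i, 0 ≤ x i) ∧ ∑ i, x i ≤ t}

theorem cornerSimplex_measurable (m : ℕ) (t : ℝ) : MeasurableSet (cornerSimplex m t) := by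
  have : IsClosed (cornerSimplex m t) := by
    have h1 : IsClosed {x : Fin m → ℝ | ∀ i, 0 ≤ x i} := by
      simp only [Set.ofPred_forall]
      exact isClosed_iInter fun i => isClosed_le continuous_const (continuous_apply i)
    have h2 : IsClosed {x : Fin m → ℝ | ∑ i, x i ≤ t} :=
      isClosed_le (by fun_prop) continuous_const
    exact h1.inter h2
  exact this.measurableSet

theorem cornerSimplex_integrableOn (m : ℕ) (t : ℝ) (f : (Fin m → ℝ) → ℝ) (hf : Continuous f) :
    IntegrableOn f (cornerSimplex m t) := by
  have h : IntegrableOn f (Set.Icc (0 : Fin m → ℝ) (fun _ => t)) := hf.integrableOn_Icc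
  refine h.mono_set ?_
  rintro x ⟨h0, h1⟩
  refine ⟨h0, fun i => ?_⟩
  exact (Finset.single_le_sum (fun j _ => h0 j) (Finset.mem_univ i)).trans h1

theorem beta_aux (m : ℕ) (t a c S Q : ℝ) :
    ∫ s in (0 : ℝ)..t, ((t - s) ^ m * (a + c * s) ^ 2 / (m.factorial : ℝ)
        + 2 * (a + c * s) * (t - s) ^ (m + 1) / ((m + 1).factorial : ℝ) * S
        + (t - s) ^ (m + 2) / ((m + 2).factorial : ℝ) * Q)
      = t ^ (m + 1) * a ^ 2 / ((m + 1).factorial : ℝ)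
        + 2 * a * t ^ (m + 2) / ((m + 2).factorial : ℝ) * (c + S)
        + t ^ (m + 3) / ((m + 3).factorial : ℝ) * (2 * c ^ 2 + 2 * c * S + Q) := by
  have hF : (m.factorial : ℝ) ≠ 0 := by positivity
  have e1 : ((m + 1).factorial : ℝ) = (m + 1) * m.factorial := by
    rw [Nat.factorial_succ]; push_cast; ring
  have e2 : ((m + 2).factorial : ℝ) = (m + 2) * ((m + 1) * m.factorial) := by
    rw [Nat.factorial_succ, Nat.cast_mul, e1]; push_cast; ring
  have e3 : ((m + 3).factorial : ℝ) = (m + 3) * ((m + 2) * ((m + 1) * m.factorial)) := by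
    rw [Nat.factorial_succ, Nat.cast_mul, e2]; push_cast; ring
  have h1 : (m : ℝ) + 1 ≠ 0 := by positivity
  have h2 : (m : ℝ) + 2 ≠ 0 := by positivity
  have h3 : (m : ℝ) + 3 ≠ 0 := by positivity
  rw [e1, e2, e3]
  set F : ℝ := (m.factorial : ℝ)
  -- antiderivative in `u = t - s`, with `b = a + c * t`
  let G : ℝ → ℝ := fun s =>
    -((t - s) ^ (m + 1) * ((a + c * t) ^ 2 / (F * (m + 1)))
      + (t - s) ^ (m + 2) * ((-2 * (a + c * t) * c / F + 2 * (a + c * t) * S / ((m + 1) * F)) / (m + 2))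
      + (t - s) ^ (m + 3) * ((c ^ 2 / F - 2 * c * S / ((m + 1) * F) + Q / ((m + 2) * ((m + 1) * F)))
          / (m + 3)))
  have hp : ∀ (k : ℕ) (s : ℝ), HasDerivAt (fun s : ℝ => (t - s) ^ (k + 1))
      (-((k + 1) * (t - s) ^ k)) s := by
    intro k s
    have := ((hasDerivAt_id s).const_sub t).pow (k + 1)
    refine this.congr_deriv ?_
    push_cast
    simp
  have hG : ∀ s ∈ Set.uIcc 0 t, HasDerivAt G ((t - s) ^ m * (a + c * s) ^ 2 / F
        + 2 * (a + c * s) * (t - s) ^ (m + 1) / ((m + 1) * F) * S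
        + (t - s) ^ (m + 2) / ((m + 2) * ((m + 1) * F)) * Q) s := by
    intro s _
    have := ((((hp m s).mul_const ((a + c * t) ^ 2 / (F * (m + 1)))).add
      ((hp (m + 1) s).mul_const ((-2 * (a + c * t) * c / F
        + 2 * (a + c * t) * S / ((m + 1) * F)) / (m + 2)))).add
      ((hp (m + 2) s).mul_const ((c ^ 2 / F - 2 * c * S / ((m + 1) * F)
        + Q / ((m + 2) * ((m + 1) * F))) / (m + 3)))).neg
    refine this.congr_deriv ?_
    push_cast
    field_simp
    ring
  rw [intervalIntegral.integral_eq_sub_of_hasDerivAt hG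
    (Continuous.intervalIntegrable (by fun_prop) _ _)]
  simp only [G, sub_self, sub_zero]
  field_simp
  ring

theorem cornerSimplex_fubini (m : ℕ) (t : ℝ) (ht : 0 ≤ t) (f : (Fin (m + 1) → ℝ) → ℝ)
    (hf : Continuous f) :
    ∫ x in cornerSimplex (m + 1) t, f x
      = ∫ s in (0 : ℝ)..t, ∫ y in cornerSimplex m (t - s), f (Fin.cons s y) := by
  have hmp := (volume_preserving_piFinSuccAbove (fun _ : Fin (m + 1) => ℝ) 0).symm
  rw [← integral_indicator (cornerSimplex_measurable _ _)]
  have hint : Integrable (Set.indicator (cornerSimplex (m + 1) t) f) :=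
    (cornerSimplex_integrableOn _ _ f hf).integrable_indicator (cornerSimplex_measurable _ _)
  have hint2 := (hmp.integrable_comp_emb (MeasurableEquiv.measurableEmbedding _)).2 hint
  rw [← hmp.integral_comp']
  rw [Measure.volume_eq_prod] at hint2 ⊢
  have hpt : ∀ (s : ℝ) (y : Fin m → ℝ),
      (MeasurableEquiv.piFinSuccAbove (fun _ : Fin (m + 1) => ℝ) 0).symm (s, y)
        = (Fin.cons s y : Fin (m + 1) → ℝ) := by
    intro s y
    simp [MeasurableEquiv.piFinSuccAbove, Fin.insertNthEquiv]
  simp only [Function.comp_def] at hint2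
  rw [integral_prod _ hint2, intervalIntegral.integral_of_le ht, ← integral_Icc_eq_integral_Ioc,
    ← integral_indicator measurableSet_Icc]
  congr 1
  ext s
  simp only [hpt]
  have hmem : ∀ y : Fin m → ℝ, (Fin.cons s y : Fin (m + 1) → ℝ) ∈ cornerSimplex (m + 1) t ↔
      0 ≤ s ∧ y ∈ cornerSimplex m (t - s) := by
    intro y
    simp only [cornerSimplex, Set.mem_setOf_eq, Fin.forall_fin_succ, Fin.sum_univ_succ,
      Fin.cons_zero, Fin.cons_succ, and_assoc, le_sub_iff_add_le']
  by_cases hs : s ∈ Set.Icc 0 t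
  · rw [Set.indicator_of_mem hs, ← integral_indicator (cornerSimplex_measurable _ _)]
    congr 1
    ext y
    by_cases hy : y ∈ cornerSimplex m (t - s)
    · rw [Set.indicator_of_mem hy, Set.indicator_of_mem ((hmem y).2 ⟨hs.1, hy⟩)]
    · rw [Set.indicator_of_notMem hy, Set.indicator_of_notMem (fun h => hy ((hmem y).1 h).2)]
  · rw [Set.indicator_of_notMem hs]
    refine integral_eq_zero_of_ae (Filter.Eventually.of_forall fun y => ?_)
    refine Set.indicator_of_notMem (fun h => hs ?_) _
    obtain ⟨h0, h1, h2⟩ := (hmem y).1 h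
    have : 0 ≤ ∑ i, y i := Finset.sum_nonneg fun i _ => h1 i
    exact ⟨h0, by linarith⟩

theorem cornerSimplex_sq (m : ℕ) : ∀ (t : ℝ) (_ : 0 ≤ t) (a : ℝ) (c : Fin m → ℝ),
    ∫ x in cornerSimplex m t, (a + ∑ i, c i * x i) ^ 2
      = t ^ m * a ^ 2 / (m.factorial : ℝ)
        + 2 * a * t ^ (m + 1) / ((m + 1).factorial : ℝ) * (∑ i, c i)
        + t ^ (m + 2) / ((m + 2).factorial : ℝ) * ((∑ i, c i) ^ 2 + ∑ i, c i ^ 2) := by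
  induction m with
  | zero =>
    intro t ht a c
    have : cornerSimplex 0 t = Set.univ := by
      ext x; simp [cornerSimplex, ht]
    rw [this]
    have hv : (volume : Measure (Fin 0 → ℝ)) Set.univ = 1 := by
      rw [volume_pi, Measure.pi_of_empty, measure_univ]
    simp [integral_unique, Measure.real, hv]
  | succ m ih =>
    intro t ht a c
    rw [cornerSimplex_fubini m t ht _ (by fun_prop)]
    have hcongr : Set.EqOn (fun s : ℝ => ∫ y in cornerSimplex m (t - s),
        (a + ∑ i, c i * (Fin.cons s y : Fin (m + 1) → ℝ) i) ^ 2)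
        (fun s => ((t - s) ^ m * (a + c 0 * s) ^ 2 / (m.factorial : ℝ)
        + 2 * (a + c 0 * s) * (t - s) ^ (m + 1) / ((m + 1).factorial : ℝ) * (∑ i : Fin m, c i.succ)
        + (t - s) ^ (m + 2) / ((m + 2).factorial : ℝ)
          * ((∑ i : Fin m, c i.succ) ^ 2 + ∑ i : Fin m, c i.succ ^ 2))) (Set.uIcc 0 t) := by
      intro s hs
      rw [Set.uIcc_of_le ht] at hs
      have := ih (t - s) (by linarith [hs.2]) (a + c 0 * s) (fun i => c i.succ)
      simp only [Fin.sum_univ_succ, Fin.cons_zero, Fin.cons_succ]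
      simp only [← add_assoc]
      exact this
    rw [intervalIntegral.integral_congr hcongr, beta_aux]
    simp only [Fin.sum_univ_succ]
    ring

theorem stdSimplexUniform_sq (m : ℕ) (c : Fin (m + 1) → ℝ) :
    ∫ w, (∑ i, c i * w i) ^ 2 ∂(stdSimplexUniform (m + 1))
      = ((∑ i, c i) ^ 2 + ∑ i, c i ^ 2) / (((m : ℝ) + 1) * (m + 2)) := by
  unfold stdSimplexUniform
  rw [integral_map]
  rotate_left
  · refine Measurable.aemeasurable ?_
    refine measurable_pi_lambda _ fun i => ?_
    split_ifs <;> fun_prop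
  · exact Continuous.aestronglyMeasurable (by fun_prop)
  rw [integral_smul_measure]
  have := cornerSimplex_sq m 1 zero_le_one (c (Fin.last m)) (fun i => c i.castSucc - c (Fin.last m))
  have e : ∀ x : Fin m → ℝ, (∑ i : Fin (m + 1), c i *
      (if h : (i : ℕ) < m + 1 - 1 then x ⟨i, h⟩ else 1 - ∑ j, x j))
      = c (Fin.last m) + ∑ i : Fin m, (c i.castSucc - c (Fin.last m)) * x i := by
    intro x
    rw [Fin.sum_univ_castSucc]
    simp [sub_mul, Finset.sum_sub_distrib, ← Finset.mul_sum]
    ring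
  have e' : (∫ x in {x : Fin (m + 1 - 1) → ℝ | (∀ i, 0 ≤ x i) ∧ ∑ i, x i ≤ 1},
      (∑ i : Fin (m + 1), c i *
      (if h : (i : ℕ) < m + 1 - 1 then x ⟨i, h⟩ else 1 - ∑ j, x j)) ^ 2) =
      ∫ x in cornerSimplex m 1,
        (c (Fin.last m) + ∑ i : Fin m, (c i.castSucc - c (Fin.last m)) * x i) ^ 2 := by
    simp only [← e]
    rfl
  rw [e', this]
  have hF : (m.factorial : ℝ) ≠ 0 := by positivity
  have e1 : ((m + 1).factorial : ℝ) = (m + 1) * m.factorial := by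
    rw [Nat.factorial_succ]; push_cast; ring
  have e2 : ((m + 2).factorial : ℝ) = (m + 2) * ((m + 1) * m.factorial) := by
    rw [Nat.factorial_succ, Nat.cast_mul, e1]; push_cast; ring
  have h1 : (m : ℝ) + 1 ≠ 0 := by positivity
  have h2 : (m : ℝ) + 2 ≠ 0 := by positivity
  rw [e1, e2]
  simp only [Fin.sum_univ_castSucc, sub_sq, Finset.sum_sub_distrib, Finset.sum_add_distrib,
    ← Finset.sum_mul, ← Finset.mul_sum]
  simp
  field_simp
  ring

theorem sum_weight (n : ℕ) (a b : ℝ) :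
    ∑ y : Fin n → Bool, a ^ hammingWt y * b ^ (n - hammingWt y) = (a + b) ^ n := by
  have h : ∀ y : Fin n → Bool, a ^ hammingWt y * b ^ (n - hammingWt y)
      = ∏ i, (if y i = true then a else b) := by
    intro y
    rw [Finset.prod_ite, Finset.prod_const, Finset.prod_const]
    congr 2
    have := Finset.card_filter_add_card_filter_not (s := (Finset.univ : Finset (Fin n)))
      (fun i => y i = true)
    simp only [Finset.card_univ, Fintype.card_fin] at this
    unfold hammingWt
    omega
  simp only [h]
  have := Finset.prod_univ_sum (fun _ : Fin n => (Finset.univ : Finset Bool))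
    (fun _ z => if z = true then a else b)
  rw [Fintype.piFinset_univ] at this
  rw [← this]
  simp

theorem bitstringDirichlet_sq (n : ℕ) (c : (Fin n → Bool) → ℝ) :
    ∫ w, (∑ y, c y * w y) ^ 2 ∂(bitstringDirichlet n)
      = ((∑ y, c y) ^ 2 + ∑ y, c y ^ 2) / ((2 : ℝ) ^ n * (2 ^ n + 1)) := by
  unfold bitstringDirichlet
  rw [integral_map]
  rotate_left
  · exact Measurable.aemeasurable (by fun_prop)
  · exact Continuous.aestronglyMeasurable (by fun_prop)
  generalize (Fintype.equivFinOfCardEq (by simp [Fintype.card_fun]) : (Fin n → Bool) ≃ Fin (2 ^ n)) = e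
  have key : ∀ (M : ℕ) (hM : 0 < M) (d : Fin M → ℝ), ∫ w, (∑ i, d i * w i) ^ 2 ∂(stdSimplexUniform M)
      = ((∑ i, d i) ^ 2 + ∑ i, d i ^ 2) / ((M : ℝ) * (M + 1)) := by
    intro M hM d
    obtain ⟨m, rfl⟩ : ∃ m, M = m + 1 := ⟨M - 1, by omega⟩
    rw [stdSimplexUniform_sq]
    push_cast
    ring
  have k := key (2 ^ n) (by positivity) (fun i => c (e.symm i))
  rw [Equiv.sum_comp e.symm c, Equiv.sum_comp e.symm (fun y => c y ^ 2)] at k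
  push_cast at k
  rw [← k]
  congr 1
  ext w
  rw [← Equiv.sum_comp e]
  simp

/-- Key readout-error computation: for fixed `x ∈ {0,1}^n`, with
`(w_y) ~ Dirichlet(1,...,1)` (`M = 2^n`) and `B_q(y) = q^{|y|}(1-q)^{n-|y|}`,
`M² E[(∑_{y ≠ 0} w_{x ⊕ y} B_q(y))²] = (M/(M+1)) ([q² + (1-q)²]^n - 2(1-q)^n + 1)`. -/
theorem readout_noise_second_moment (n : ℕ) (hn : 1 ≤ n) (q : ℝ) (hq : q ∈ Set.Ioo (0 : ℝ) 1)
    (x : Fin n → Bool) :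
    ((2 : ℝ) ^ n) ^ 2 *
      ∫ w, (∑ y ∈ Finset.univ.filter (fun y : Fin n → Bool => y ≠ fun _ => false),
          w (fun i => xor (x i) (y i)) * (q ^ hammingWt y * (1 - q) ^ (n - hammingWt y))) ^ 2
        ∂(bitstringDirichlet n)
      = ((2 : ℝ) ^ n / ((2 : ℝ) ^ n + 1)) *
          ((q ^ 2 + (1 - q) ^ 2) ^ n - 2 * (1 - q) ^ n + 1) := by
  have hinv : Function.Involutive (fun (y : Fin n → Bool) => (fun i => xor (x i) (y i))) := by
    intro y; ext i; simp
  let e : (Fin n → Bool) ≃ (Fin n → Bool) := hinv.toPerm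
  let B : (Fin n → Bool) → ℝ := fun y => q ^ hammingWt y * (1 - q) ^ (n - hammingWt y)
  let d : (Fin n → Bool) → ℝ := fun y => if y ≠ fun _ => false then B y else 0
  have hB0 : B (fun _ => false) = (1 - q) ^ n := by simp [B, hammingWt]
  have hd : ∀ y, d y = B y - if y = (fun _ => false) then B y else 0 := by
    intro y; by_cases h : y = (fun _ => false) <;> simp [d, h]
  have hd2 : ∀ y, d y ^ 2 = B y ^ 2 - if y = (fun _ => false) then B y ^ 2 else 0 := by
    intro y; by_cases h : y = (fun _ => false) <;> simp [d, h]
  have s1 : ∑ y, d y = 1 - (1 - q) ^ n := by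
    simp only [hd, Finset.sum_sub_distrib, Finset.sum_ite_eq', Finset.mem_univ, if_true, hB0]
    rw [sum_weight]; simp
  have s2 : ∑ y, d y ^ 2 = (q ^ 2 + (1 - q) ^ 2) ^ n - ((1 - q) ^ n) ^ 2 := by
    simp only [hd2, Finset.sum_sub_distrib, Finset.sum_ite_eq', Finset.mem_univ, if_true, hB0]
    rw [← sum_weight]
    congr 1
    refine Finset.sum_congr rfl fun y _ => ?_
    simp only [B, mul_pow, ← pow_mul, mul_comm 2]
  have k := bitstringDirichlet_sq n (fun y => d (e y))
  rw [Equiv.sum_comp e d, Equiv.sum_comp e (fun y => d y ^ 2), s1, s2] at k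
  have hint : ∀ w : (Fin n → Bool) → ℝ,
      (∑ y ∈ Finset.univ.filter (fun y : Fin n → Bool => y ≠ fun _ => false),
          w (fun i => xor (x i) (y i)) * (q ^ hammingWt y * (1 - q) ^ (n - hammingWt y)))
        = ∑ y, d (e y) * w y := by
    intro w
    rw [← Equiv.sum_comp e, Finset.sum_filter]
    refine Finset.sum_congr rfl fun y _ => ?_
    have : e (e y) = y := hinv y
    rw [this]
    simp only [d, ite_mul, zero_mul]
    congr 1
    exact mul_comm _ _
  simp only [hint]
  rw [k]
  field_simp
  ring
end
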